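/- arXiv:1602.03849 — 2 statements merged into one kernel-verified Lean document; each statement's English description precedes it below -/
import Mathlib

section
/- Let P be a Markov kernel on a standard Borel space X, let (u,C) be a drift function with constant b, and let p > 1. Then for every f ∈ E_u^p, every x ∈ X with u(x) < ∞, and every ε ∈ (0,p), the sequence f(X_n)/n^{1/(p−ε)} converges to 0 both ℙ_x-almost everywhere and in L¹(ℙ_x). -/
open MeasureTheory ProbabilityTheory Filter Set
open scoped ENNReal NNReal

/-- The action of a Markov kernel on `[0,∞]`-valued functions: `Pf(x) = ∫ f(y) P(x,dy)`. -/
noncomputable def kernelOp {X : Type*} [MeasurableSpace X] (P : ProbabilityTheory.Kernel X X)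
    (f : X → ℝ≥0∞) : X → ℝ≥0∞ :=
  fun x => ∫⁻ y, f y ∂(P x)

/-- `(u, C)` is a drift function for the Markov kernel `P`, with constant `b`. -/
structure IsDriftFunction {X : Type*} [MeasurableSpace X] (P : ProbabilityTheory.Kernel X X)
    (u : X → ℝ≥0∞) (C : Set X) (b : ℝ≥0) : Prop where
  measurable_u : Measurable u
  one_le : ∀ x, 1 ≤ u x
  measurableSet_C : MeasurableSet C
  bddOn_C : ∃ M : ℝ≥0, ∀ x ∈ C, u x ≤ M
  drift : ∀ x, kernelOp P u x ≤ u x + C.indicator (fun _ => (b : ℝ≥0∞)) x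

/-- `f ∈ E_u^p` with `‖f‖_{E_u^p} ≤ M`. -/
def MemDriftSpace {X : Type*} [MeasurableSpace X] (P : ProbabilityTheory.Kernel X X)
    (u : X → ℝ≥0∞) (C : Set X) (b : ℝ≥0) (p : ℝ) (f : X → ℝ) (M : ℝ≥0) : Prop :=
  Measurable f ∧ ∀ x, (‖f x‖₊ : ℝ≥0∞) ≤
    (M : ℝ≥0∞) * (u x - kernelOp P u x + C.indicator (fun _ => (b : ℝ≥0∞)) x) ^ (1 / p)

/-- `μ` is the law `ℙ_x` on `X^ℕ` of the canonical Markov chain with kernel `P` started at `x`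
(the Ionescu–Tulcea measure): the zeroth coordinate is a.s. `x`, and the Markov property holds:
for every `n`, every nonnegative measurable `g` and every nonnegative `h` measurable with respect
to the first `n+1` coordinates, `𝔼[h · g(X_{n+1})] = 𝔼[h · (Pg)(X_n)]`. -/
def IsCanonicalChain {X : Type*} [MeasurableSpace X] (P : ProbabilityTheory.Kernel X X)
    (x : X) (μ : Measure (ℕ → X)) : Prop :=
  IsProbabilityMeasure μ ∧
  μ.map (fun ω => ω 0) = Measure.dirac x ∧
  ∀ n : ℕ, ∀ g : X → ℝ≥0∞, Measurable g →
    ∀ h : (ℕ → X) → ℝ≥0∞,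
      Measurable[MeasurableSpace.comap (fun (ω : ℕ → X) (i : Fin (n + 1)) => ω i)
        MeasurableSpace.pi] h →
      ∫⁻ ω, h ω * g (ω (n + 1)) ∂μ = ∫⁻ ω, h ω * kernelOp P g (ω n) ∂μ

/-- Weighted telescoping: the drift inequality for expectations, summed against an
antitone weight. -/
lemma weighted_drift_sum (a U w : ℕ → ℝ≥0∞) (B : ℝ≥0∞) (hw : Antitone w)
    (h : ∀ k, a k + U (k + 1) ≤ U k + B) (n : ℕ) :
    ∑ k ∈ Finset.range n, w k * a k + w n * U n ≤
      w 0 * U 0 + B * ∑ k ∈ Finset.range n, w k := by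
  induction n with
  | zero => simp
  | succ n ih =>
    rw [Finset.sum_range_succ, Finset.sum_range_succ]
    calc ∑ k ∈ Finset.range n, w k * a k + w n * a n + w (n + 1) * U (n + 1)
        ≤ ∑ k ∈ Finset.range n, w k * a k + w n * a n + w n * U (n + 1) := by
          gcongr
          exact hw (Nat.le_succ n)
      _ = ∑ k ∈ Finset.range n, w k * a k + w n * (a n + U (n + 1)) := by ring
      _ ≤ ∑ k ∈ Finset.range n, w k * a k + w n * (U n + B) := by
          exact add_le_add le_rfl (mul_le_mul_right (h n) _)
      _ = (∑ k ∈ Finset.range n, w k * a k + w n * U n) + w n * B := by ring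
      _ ≤ (w 0 * U 0 + B * ∑ k ∈ Finset.range n, w k) + w n * B := by gcongr
      _ = _ := by ring

/-- The quantity `(u - Pu)⁺ + b 1_C` satisfies a drift inequality with constant `2b`. -/
lemma drift_pointwise {X : Type*} [MeasurableSpace X] (P : ProbabilityTheory.Kernel X X)
    (u : X → ℝ≥0∞) (C : Set X) (b : ℝ≥0) (hu : IsDriftFunction P u C b) (x : X) :
    (u x - kernelOp P u x + C.indicator (fun _ => (b : ℝ≥0∞)) x) + kernelOp P u x
      ≤ u x + 2 * b := by
  have hd := hu.drift x
  have hb : C.indicator (fun _ => (b : ℝ≥0∞)) x ≤ b := by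
    apply Set.indicator_le_self' (fun _ _ => zero_le)
  rcases le_total (kernelOp P u x) (u x) with h | h
  · calc _ = (u x - kernelOp P u x + kernelOp P u x)
          + C.indicator (fun _ => (b : ℝ≥0∞)) x := by ring
      _ = u x + C.indicator (fun _ => (b : ℝ≥0∞)) x := by rw [tsub_add_cancel_of_le h]
      _ ≤ u x + b := by gcongr
      _ ≤ u x + 2 * b := by
          rw [two_mul]
          gcongr
          exact le_self_add
  · rw [tsub_eq_zero_of_le h, zero_add]
    calc _ ≤ (b : ℝ≥0∞) + (u x + b) := by
          gcongr
          exact hd.trans (by gcongr)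
      _ = u x + 2 * b := by ring

/-- If `(u,C)` is a drift function, `p > 1`, `f ∈ E_u^p`, `u(x) < ∞` and
`ε ∈ (0,p)`, then `f(X_n)/n^{1/(p−ε)} → 0`, `ℙ_x`-almost everywhere and in `L¹(ℙ_x)`. -/
theorem stmt5 {X : Type*} [MeasurableSpace X] [StandardBorelSpace X]
    (P : ProbabilityTheory.Kernel X X) [IsMarkovKernel P]
    (u : X → ℝ≥0∞) (C : Set X) (b : ℝ≥0) (hu : IsDriftFunction P u C b)
    (p : ℝ) (hp : 1 < p)
    (f : X → ℝ) (M : ℝ≥0) (hf : MemDriftSpace P u C b p f M)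
    (x : X) (hx : u x < ∞) (ε : ℝ) (hε : 0 < ε) (hεp : ε < p)
    (μ : Measure (ℕ → X)) (hμ : IsCanonicalChain P x μ) :
    (∀ᵐ ω ∂μ, Tendsto (fun n : ℕ => f (ω n) / (n : ℝ) ^ (1 / (p - ε))) atTop (nhds 0)) ∧
    Tendsto (fun n : ℕ => ∫ ω, |f (ω n) / (n : ℝ) ^ (1 / (p - ε))| ∂μ) atTop (nhds 0) := by
  obtain ⟨hprob, h0, hM⟩ := hμ
  obtain ⟨hfm, hfb⟩ := hf
  have hp0 : 0 < p := by linarith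
  have hpe : 0 < p - ε := by linarith
  set s : ℝ := p / (p - ε) with hs
  have hs1 : 1 < s := by
    rw [hs, one_lt_div hpe]
    linarith
  have hPu : Measurable (kernelOp P u) := hu.measurable_u.lintegral_kernel
  let v : X → ℝ≥0∞ := fun y =>
    u y - kernelOp P u y + C.indicator (fun _ => (b : ℝ≥0∞)) y
  have hv : Measurable v :=
    (hu.measurable_u.sub hPu).add (measurable_const.indicator hu.measurableSet_C)
  let U : ℕ → ℝ≥0∞ := fun n => ∫⁻ ω, u (ω n) ∂μ
  let a : ℕ → ℝ≥0∞ := fun n => ∫⁻ ω, v (ω n) ∂μ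
  have hUa : ∀ k, a k + U (k + 1) ≤ U k + 2 * b := by
    intro k
    have h1 : U (k + 1) = ∫⁻ ω, kernelOp P u (ω k) ∂μ := by
      have := hM k u hu.measurable_u (fun _ => 1) measurable_const
      simpa using this
    rw [h1]
    calc _ = ∫⁻ ω, (v (ω k) + kernelOp P u (ω k)) ∂μ := by
          have hvk : Measurable fun ω : ℕ → X => v (ω k) := hv.comp (measurable_pi_apply k)
          rw [lintegral_add_left hvk]
      _ ≤ ∫⁻ ω, (u (ω k) + 2 * b) ∂μ :=
          lintegral_mono fun ω => drift_pointwise P u C b hu (ω k)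
      _ = U k + 2 * b := by
          rw [lintegral_add_right _ measurable_const]
          simp [U]
  have hU0 : U 0 = u x := by
    have : ∫⁻ y, u y ∂(μ.map (fun ω => ω 0)) = U 0 :=
      lintegral_map hu.measurable_u (measurable_pi_apply 0)
    rw [← this, h0, lintegral_dirac' _ hu.measurable_u]
  have hU1 : U 1 ≠ ∞ := by
    have h2 : U 1 ≤ u x + 2 * b := by
      rw [← hU0]
      exact le_add_self.trans (hUa 0)
    exact ne_top_of_le_ne_top (by finiteness) h2
  -- weights
  let w : ℕ → ℝ≥0∞ := fun n => ENNReal.ofReal (((n : ℝ) + 1) ^ (-s))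
  have hw : Antitone w := by
    intro m n hmn
    apply ENNReal.ofReal_le_ofReal
    apply Real.rpow_le_rpow_of_nonpos (by positivity) (by gcongr) (by linarith)
  have hwsum : ∑' n, w n ≠ ∞ := by
    have h1 : Summable (fun n : ℕ => ((n : ℝ) + 1) ^ (-s)) := by
      have := (summable_nat_add_iff 1).2 (Real.summable_nat_rpow.2 (by linarith : -s < -1))
      simpa using this
    exact h1.tsum_ofReal_ne_top
  have hsum : ∑' n, w n * a (n + 1) ≠ ∞ := by
    have hbd : ∑' n, w n * a (n + 1) ≤ w 0 * U 1 + 2 * b * ∑' n, w n := by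
      rw [ENNReal.tsum_eq_iSup_nat]
      apply iSup_le
      intro n
      have := weighted_drift_sum (fun k => a (k + 1)) (fun k => U (k + 1)) w (2 * b) hw
        (fun k => hUa (k + 1)) n
      refine (le_self_add.trans this).trans ?_
      simp only [zero_add]
      gcongr
      exact ENNReal.sum_le_tsum _
    refine ne_top_of_le_ne_top ?_ hbd
    have : w 0 ≠ ∞ := ENNReal.ofReal_ne_top
    finiteness
  let F : ℕ → (ℕ → X) → ℝ := fun n ω => f (ω (n + 1)) / ((n + 1 : ℕ) : ℝ) ^ (1 / (p - ε))
  have hFm : ∀ n, Measurable (F n) := fun n =>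
    (hfm.comp (measurable_pi_apply (n + 1))).div_const _
  have hFb : ∀ n ω, ‖F n ω‖ₑ ^ p ≤ (M : ℝ≥0∞) ^ p * (w n * v (ω (n + 1))) := by
    intro n ω
    have hpos : (0 : ℝ) < (n : ℝ) + 1 := by positivity
    have h1 : ‖F n ω‖ₑ = ‖f (ω (n + 1))‖ₑ *
        ENNReal.ofReal (((n : ℝ) + 1) ^ (-(1 / (p - ε)))) := by
      simp only [F]
      rw [div_eq_mul_inv, enorm_mul, Nat.cast_add, Nat.cast_one, ← Real.rpow_neg hpos.le,
        Real.enorm_of_nonneg (Real.rpow_nonneg hpos.le _)]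
    have h2 : ENNReal.ofReal (((n : ℝ) + 1) ^ (-(1 / (p - ε)))) ^ p = w n := by
      rw [ENNReal.ofReal_rpow_of_nonneg (by positivity) hp0.le, ← Real.rpow_mul hpos.le]
      simp only [w, hs]
      congr 2
      ring
    have h3 : ‖f (ω (n + 1))‖ₑ ^ p ≤ (M : ℝ≥0∞) ^ p * v (ω (n + 1)) := by
      calc _ ≤ ((M : ℝ≥0∞) * v (ω (n + 1)) ^ (1 / p)) ^ p := by
            gcongr
            exact hfb _
        _ = _ := by
            rw [ENNReal.mul_rpow_of_nonneg _ _ hp0.le, ← ENNReal.rpow_mul,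
              one_div_mul_cancel hp0.ne', ENNReal.rpow_one]
    rw [h1, ENNReal.mul_rpow_of_nonneg _ _ hp0.le, h2]
    calc _ ≤ (M : ℝ≥0∞) ^ p * v (ω (n + 1)) * w n := by gcongr
      _ = _ := by ring
  have hFsum : ∑' n, ∫⁻ ω, ‖F n ω‖ₑ ^ p ∂μ ≠ ∞ := by
    have h1 : ∀ n, ∫⁻ ω, ‖F n ω‖ₑ ^ p ∂μ ≤ (M : ℝ≥0∞) ^ p * (w n * a (n + 1)) := by
      intro n
      have hvm : Measurable fun ω : ℕ → X => v (ω (n + 1)) :=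
        hv.comp (measurable_pi_apply (n + 1))
      calc _ ≤ ∫⁻ ω, (M : ℝ≥0∞) ^ p * (w n * v (ω (n + 1))) ∂μ :=
            lintegral_mono fun ω => hFb n ω
        _ = _ := by
            rw [lintegral_const_mul _ (hvm.const_mul _), lintegral_const_mul _ hvm]
    refine ne_top_of_le_ne_top ?_ (ENNReal.tsum_le_tsum h1)
    rw [ENNReal.tsum_mul_left]
    exact ENNReal.mul_ne_top (ENNReal.rpow_ne_top_of_nonneg hp0.le ENNReal.coe_ne_top) hsum
  -- from `g ^ p → 0` to `g → 0`
  have hroot : ∀ g : ℕ → ℝ≥0∞, Tendsto g atTop (nhds 0) →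
      Tendsto (fun n => g n ^ (1 / p)) atTop (nhds 0) := by
    intro g hg
    have := (ENNReal.continuous_rpow_const (y := 1 / p)).tendsto 0 |>.comp hg
    rwa [ENNReal.zero_rpow_of_pos (by positivity)] at this
  constructor
  · have hFp : ∀ n, Measurable fun ω => ‖F n ω‖ₑ ^ p := fun n => (hFm n).enorm.pow_const p
    have h1 : ∫⁻ ω, ∑' n, ‖F n ω‖ₑ ^ p ∂μ ≠ ∞ := by
      rwa [lintegral_tsum fun n => (hFp n).aemeasurable]
    filter_upwards [ae_lt_top (Measurable.tsum hFp) h1] with ω hω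
    rw [← tendsto_add_atTop_iff_nat 1]
    have h2 := hroot _ (ENNReal.tendsto_atTop_zero_of_tsum_ne_top hω.ne)
    have h3 : Tendsto (fun n => ‖F n ω‖ₑ) atTop (nhds 0) := by
      refine h2.congr fun n => ?_
      rw [← ENNReal.rpow_mul, mul_one_div_cancel hp0.ne', ENNReal.rpow_one]
    exact tendsto_zero_iff_enorm_tendsto_zero.2 h3
  · rw [← tendsto_add_atTop_iff_nat 1]
    have h2 := hroot _ (ENNReal.tendsto_atTop_zero_of_tsum_ne_top hFsum)
    have h3 : ∀ n, ∫⁻ ω, ‖F n ω‖ₑ ∂μ ≤ (∫⁻ ω, ‖F n ω‖ₑ ^ p ∂μ) ^ (1 / p) := by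
      intro n
      have := eLpNorm'_le_eLpNorm'_of_exponent_le (μ := μ) one_pos hp.le
        (hFm n).aestronglyMeasurable
      simpa [eLpNorm'] using this
    have h4 : Tendsto (fun n => ∫⁻ ω, ‖F n ω‖ₑ ∂μ) atTop (nhds 0) :=
      tendsto_of_tendsto_of_tendsto_of_le_of_le tendsto_const_nhds h2
        (fun _ => zero_le) h3
    have h5 := (ENNReal.tendsto_toReal ENNReal.zero_ne_top).comp h4
    refine h5.congr fun n => ?_
    exact (integral_norm_eq_lintegral_enorm (hFm n).aestronglyMeasurable).symm
end

section
/- Let P be a Markov kernel on a standard Borel space X, let (u,C) be a drift function with constant b, and let p ∈ (1,∞). Then for every f ∈ E_u^p and every x ∈ X with u(x) < ∞, (1/n) ∑_{k=0}^{n−1} (f(X_{k+1}) − Pf(X_k)) converges to 0 both ℙ_x-almost everywhere and in L^p(ℙ_x). -/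
open MeasureTheory ProbabilityTheory Filter Set
open scoped ENNReal NNReal

/-- The action of a Markov kernel on real-valued functions: `Pf(x) = ∫ f(y) P(x,dy)`. -/
noncomputable def kernelOpReal {X : Type*} [MeasurableSpace X] (P : ProbabilityTheory.Kernel X X)
    (f : X → ℝ) : X → ℝ :=
  fun x => ∫ y, f y ∂(P x)

theorem aux_sq (p : ℝ) (N : ℕ) (hN : 1 ≤ N) (s : ℝ) (hs0 : 0 ≤ s) (hs1 : s ≤ 1) :
    s ^ 2 ≤ 1 / (N : ℝ) + (N : ℝ) ^ (max (p / 2 - 1) 0) * s ^ p := by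
  have hN' : (1 : ℝ) ≤ N := by exact_mod_cast hN
  have hN0 : (0 : ℝ) < N := by linarith
  have hnn : 0 ≤ (N : ℝ) ^ (max (p / 2 - 1) 0) * s ^ p := by positivity
  rcases le_or_gt (s ^ 2) (1 / (N : ℝ)) with h | h
  · linarith
  have hspos : 0 < s := by
    rcases hs0.eq_or_lt with h0 | h0
    · subst h0
      have : (0 : ℝ) < 1 / N := by positivity
      norm_num at h
      linarith [this, h]
    · exact h0
  have h1N : (0 : ℝ) ≤ 1 / N := by positivity
  suffices s ^ 2 ≤ (N : ℝ) ^ (max (p / 2 - 1) 0) * s ^ p by linarith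
  rcases le_total p 2 with h2 | h2
  · rw [max_eq_right (by linarith)]
    simp only [Real.rpow_zero, one_mul]
    rw [← Real.rpow_two]
    exact Real.rpow_le_rpow_of_exponent_ge hspos hs1 h2
  · rw [max_eq_left (by linarith)]
    have h3 : 1 ≤ s ^ 2 * N := by
      rw [div_lt_iff₀ hN0] at h
      linarith
    have h4 : 1 ≤ (s ^ 2 * N) ^ (p / 2 - 1) := Real.one_le_rpow h3 (by linarith)
    have h5 : (s ^ 2 * N) ^ (p / 2 - 1) * s ^ 2 = (N : ℝ) ^ (p / 2 - 1) * s ^ p := by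
      rw [Real.mul_rpow (by positivity) (by positivity), ← Real.rpow_natCast s 2,
        ← Real.rpow_mul hs0, mul_right_comm, ← Real.rpow_add hspos, mul_comm]
      congr 2
      push_cast
      ring
    rw [← h5]
    nlinarith [sq_nonneg s]

theorem aux_ineq1 (p : ℝ) (hp : 1 < p) (N : ℕ) (hN : 1 ≤ N) (t : ℝ) :
    |1 + t| ^ p ≤ 1 + 1 / (N : ℝ) + p * t
      + ((p + 1) ^ p + p ^ p) * (N : ℝ) ^ (max (p / 2 - 1) 0) * |t| ^ p := by
  have hN' : (1 : ℝ) ≤ N := by exact_mod_cast hN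
  have hNr : (1 : ℝ) ≤ (N : ℝ) ^ (max (p / 2 - 1) 0) := Real.one_le_rpow hN' (le_max_right _ _)
  have h1N : (0 : ℝ) ≤ 1 / N := by positivity
  have hppt : p ^ p * |t| ^ p = (p * |t|) ^ p := by
    rw [Real.mul_rpow (by linarith) (abs_nonneg _)]
  have ha : 0 ≤ (p + 1) ^ p * |t| ^ p := by positivity
  have hb : 0 ≤ p ^ p * |t| ^ p := by positivity
  rcases le_or_gt (p * |t|) 1 with h | h
  · have h0 : |p * t| ≤ 1 := by rwa [abs_mul, abs_of_pos (by linarith)]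
    have e := Real.abs_exp_sub_one_sub_id_le h0
    have ht1 : |t| ≤ 1 := by nlinarith [abs_nonneg t]
    have h1t : 0 ≤ 1 + t := by linarith [neg_abs_le t]
    have e2 : |1 + t| ^ p ≤ Real.exp (p * t) := by
      rw [abs_of_nonneg h1t, mul_comm, Real.exp_mul]
      apply Real.rpow_le_rpow h1t _ (by linarith)
      linarith [Real.add_one_le_exp t]
    have e3 := aux_sq p N hN (p * |t|) (by positivity) h
    have e4 : (p * |t|) ^ 2 = (p * t) ^ 2 := by rw [mul_pow, sq_abs, mul_pow]
    rw [← hppt] at e3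
    have := (abs_le.1 e).2
    nlinarith
  · have e1 : |1 + t| ^ p ≤ (p + 1) ^ p * |t| ^ p := by
      rw [← Real.mul_rpow (by linarith) (abs_nonneg _)]
      apply Real.rpow_le_rpow (abs_nonneg _) _ (by linarith)
      have := abs_add_le 1 t
      rw [abs_one] at this
      linarith
    have e2 : - (p * t) ≤ p ^ p * |t| ^ p := by
      rw [hppt]
      have : p * |t| ≤ (p * |t|) ^ p := by
        conv_lhs => rw [← Real.rpow_one (p * |t|)]
        exact Real.rpow_le_rpow_of_exponent_le h.le hp.le
      nlinarith [neg_abs_le t]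
    nlinarith

theorem aux_ineq (p : ℝ) (hp : 1 < p) (N : ℕ) (hN : 1 ≤ N) (a b : ℝ) :
    |a + b| ^ p ≤ (1 + 1 / (N : ℝ)) * |a| ^ p + p * ((|a| ^ p * a⁻¹) * b)
      + ((p + 1) ^ p + p ^ p) * (N : ℝ) ^ (max (p / 2 - 1) 0) * |b| ^ p := by
  by_cases ha : a = 0
  · subst ha
    have hN' : (1 : ℝ) ≤ N := by exact_mod_cast hN
    have hNr : (1 : ℝ) ≤ (N : ℝ) ^ (max (p / 2 - 1) 0) := Real.one_le_rpow hN' (le_max_right _ _)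
    have h1 : 1 ≤ (p + 1) ^ p := Real.one_le_rpow (by linarith) (by linarith)
    have h2 : 0 ≤ p ^ p := by positivity
    have h3 : 1 ≤ ((p + 1) ^ p + p ^ p) * (N : ℝ) ^ (max (p / 2 - 1) 0) := by nlinarith
    have h4 : 0 ≤ |b| ^ p := by positivity
    simp only [zero_add, abs_zero, Real.zero_rpow (by linarith : p ≠ 0)]
    nlinarith
  · have h := aux_ineq1 p hp N hN (b / a)
    have h1 : |a + b| ^ p = |a| ^ p * |1 + b / a| ^ p := by
      rw [← Real.mul_rpow (abs_nonneg _) (abs_nonneg _), ← abs_mul]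
      congr 2
      field_simp
    have h2 : |b| ^ p = |a| ^ p * |b / a| ^ p := by
      rw [← Real.mul_rpow (abs_nonneg _) (abs_nonneg _), ← abs_mul]
      congr 2
      field_simp
    rw [h1, h2]
    calc _ ≤ |a| ^ p * _ := mul_le_mul_of_nonneg_left h (by positivity)
      _ = _ := by ring

theorem aux_young (p : ℝ) (hp : 1 < p) (a b : ℝ) :
    |(|a| ^ p * a⁻¹) * b| ≤ |a| ^ p + |b| ^ p := by
  by_cases ha : a = 0
  · subst ha; simp; positivity
  have ha' : 0 < |a| := abs_pos.2 ha
  have h1 : 0 ≤ |a| ^ p := by positivity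
  have h2 : 0 ≤ |b| ^ p := by positivity
  have h0 : |(|a| ^ p * a⁻¹) * b| = |a| ^ (p - 1) * |b| := by
    rw [abs_mul, abs_mul, abs_of_nonneg h1, Real.rpow_sub_one ha'.ne', abs_inv, div_eq_mul_inv]
  rw [h0]
  rcases le_total |b| |a| with h | h
  · have : |a| ^ (p - 1) * |b| ≤ |a| ^ (p - 1) * |a| := by gcongr
    rw [Real.rpow_sub_one ha'.ne', div_mul_cancel₀ _ ha'.ne'] at this
    rw [Real.rpow_sub_one ha'.ne']
    linarith
  · have hb' : 0 < |b| := lt_of_lt_of_le ha' h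
    have : |a| ^ (p - 1) * |b| ≤ |b| ^ (p - 1) * |b| := by
      gcongr
    rw [Real.rpow_sub_one hb'.ne', div_mul_cancel₀ _ hb'.ne'] at this
    linarith

theorem aux_moment {Ω : Type*} {m0 : MeasurableSpace Ω} (μ : Measure Ω) [IsProbabilityMeasure μ]
    (ℱ : Filtration ℕ m0) (p : ℝ) (hp : 1 < p) (d : ℕ → Ω → ℝ)
    (hmeas : ∀ k, StronglyMeasurable[ℱ (k + 1)] (d k))
    (hLp : ∀ k, MemLp (d k) (ENNReal.ofReal p) μ)
    (hcond : ∀ k, μ[d k | ℱ k] =ᵐ[μ] 0)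
    (K : ℝ) (hK : ∀ n : ℕ, ∑ k ∈ Finset.range n, ∫ ω, |d k ω| ^ p ∂μ ≤ K * (n + 1)) :
    (∀ n, StronglyMeasurable[ℱ n] (fun ω => ∑ k ∈ Finset.range n, d k ω)) ∧
    (∀ n, MemLp (fun ω => ∑ k ∈ Finset.range n, d k ω) (ENNReal.ofReal p) μ) ∧
    ∃ L : ℝ, 0 ≤ L ∧ ∀ N : ℕ, 1 ≤ N →
      ∫ ω, |∑ k ∈ Finset.range N, d k ω| ^ p ∂μ ≤ L * (N : ℝ) ^ (max (p / 2 - 1) 0 + 1) := by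
  have hp0 : ENNReal.ofReal p ≠ 0 := by simp; linarith
  have hpt : ENNReal.ofReal p ≠ ∞ := ENNReal.ofReal_ne_top
  have hptr : (ENNReal.ofReal p).toReal = p := ENNReal.toReal_ofReal (by linarith)
  have h1p : (1 : ℝ≥0∞) ≤ ENNReal.ofReal p := by simpa using hp.le
  have hS : ∀ n, StronglyMeasurable[ℱ n] (fun ω => ∑ k ∈ Finset.range n, d k ω) := by
    intro n
    refine Finset.stronglyMeasurable_fun_sum _ fun k hk => ?_
    exact (hmeas k).mono (ℱ.mono (by have := Finset.mem_range.1 hk; omega))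
  have hSL : ∀ n, MemLp (fun ω => ∑ k ∈ Finset.range n, d k ω) (ENNReal.ofReal p) μ :=
    fun n => memLp_finsetSum _ fun k _ => hLp k
  refine ⟨hS, hSL, ?_⟩
  have hint : ∀ {g : Ω → ℝ}, MemLp g (ENNReal.ofReal p) μ → Integrable (fun ω => |g ω| ^ p) μ := by
    intro g hg
    have := hg.integrable_norm_rpow hp0 hpt
    simpa [hptr] using this
  set A : ℝ := (p + 1) ^ p + p ^ p with hA
  have hA0 : 0 ≤ A := by positivity
  have hK0 : 0 ≤ K := by simpa using hK 0
  have step : ∀ N : ℕ, 1 ≤ N → ∀ n,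
      ∫ ω, |∑ k ∈ Finset.range (n + 1), d k ω| ^ p ∂μ
        ≤ (1 + 1 / (N : ℝ)) * ∫ ω, |∑ k ∈ Finset.range n, d k ω| ^ p ∂μ
          + A * (N : ℝ) ^ (max (p / 2 - 1) 0) * ∫ ω, |d n ω| ^ p ∂μ := by
    intro N hN n
    set S : Ω → ℝ := fun ω => ∑ k ∈ Finset.range n, d k ω with hSdef
    have hSm : Measurable[ℱ n] S := (hS n).measurable
    let h : Ω → ℝ := fun ω => |S ω| ^ p * (S ω)⁻¹
    have hh : StronglyMeasurable[ℱ n] h := by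
      have h1 : Measurable (fun s : ℝ => |s| ^ p * s⁻¹) := by fun_prop
      exact (h1.comp hSm).stronglyMeasurable
    have hhd : Integrable (h * d n) μ := by
      refine Integrable.mono' ((hint (hSL n)).add (hint (hLp n)))
        ((hh.mono (ℱ.le n)).aestronglyMeasurable.mul (hLp n).1) ?_
      refine Eventually.of_forall fun ω => ?_
      simpa [h] using aux_young p hp (S ω) (d n ω)
    have hz : ∫ ω, h ω * d n ω ∂μ = 0 := by
      have h1 := condExp_mul_of_stronglyMeasurable_left hh hhd ((hLp n).integrable h1p)
      have h2 : μ[h * d n | ℱ n] =ᵐ[μ] 0 := by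
        filter_upwards [h1, hcond n] with ω ha hb
        rw [ha]; simp [hb]
      have h3 := integral_condExp (μ := μ) (f := h * d n) (ℱ.le n)
      rw [integral_congr_ae h2] at h3
      simpa using h3.symm
    have hmono : ∫ ω, |∑ k ∈ Finset.range (n + 1), d k ω| ^ p ∂μ ≤
        ∫ ω, ((1 + 1 / (N : ℝ)) * |S ω| ^ p + p * (h ω * d n ω)
          + A * (N : ℝ) ^ (max (p / 2 - 1) 0) * |d n ω| ^ p) ∂μ := by
      refine integral_mono (hint (hSL (n + 1))) ?_ ?_
      · exact (((hint (hSL n)).const_mul _).add (hhd.const_mul p)).add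
          ((hint (hLp n)).const_mul _)
      · intro ω
        simp only [Finset.sum_range_succ]
        exact aux_ineq p hp N hN (S ω) (d n ω)
    refine hmono.trans (le_of_eq ?_)
    rw [integral_add, integral_add, integral_const_mul, integral_const_mul, integral_const_mul, hz]
    · ring
    · exact (hint (hSL n)).const_mul _
    · exact hhd.const_mul p
    · exact ((hint (hSL n)).const_mul _).add (hhd.const_mul p)
    · exact (hint (hLp n)).const_mul _
  have bound : ∀ N : ℕ, 1 ≤ N → ∀ n,
      ∫ ω, |∑ k ∈ Finset.range n, d k ω| ^ p ∂μ
        ≤ (1 + 1 / (N : ℝ)) ^ n * (A * (N : ℝ) ^ (max (p / 2 - 1) 0)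
          * ∑ k ∈ Finset.range n, ∫ ω, |d k ω| ^ p ∂μ) := by
    intro N hN n
    have hN1 : (1 : ℝ) ≤ 1 + 1 / (N : ℝ) := by
      have : (0 : ℝ) ≤ 1 / N := by positivity
      linarith
    induction n with
    | zero => simp [Real.zero_rpow (by linarith : p ≠ 0)]
    | succ n ih =>
      refine (step N hN n).trans ?_
      rw [Finset.sum_range_succ _ n, mul_add, mul_add]
      have hD : 0 ≤ A * (N : ℝ) ^ (max (p / 2 - 1) 0) * ∫ ω, |d n ω| ^ p ∂μ := by
        have : 0 ≤ ∫ ω, |d n ω| ^ p ∂μ := integral_nonneg fun ω => by positivity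
        positivity
      refine add_le_add ?_ ?_
      · rw [pow_succ', mul_assoc]
        exact mul_le_mul_of_nonneg_left ih (by linarith)
      · exact le_mul_of_one_le_left hD (one_le_pow₀ hN1)
  refine ⟨Real.exp 1 * (A * (K * 2)), by positivity, fun N hN => ?_⟩
  have hN' : (1 : ℝ) ≤ N := by exact_mod_cast hN
  have hN0 : (0 : ℝ) < N := by linarith
  have he : (1 + 1 / (N : ℝ)) ^ N ≤ Real.exp 1 := by
    calc (1 + 1 / (N : ℝ)) ^ N ≤ (Real.exp (1 / N)) ^ N := by
          gcongr
          linarith [Real.add_one_le_exp (1 / (N : ℝ))]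
      _ = Real.exp 1 := by
          rw [← Real.exp_nat_mul]
          congr 1
          field_simp
  refine (bound N hN N).trans ?_
  calc (1 + 1 / (N : ℝ)) ^ N * (A * (N : ℝ) ^ (max (p / 2 - 1) 0)
          * ∑ k ∈ Finset.range N, ∫ ω, |d k ω| ^ p ∂μ)
      ≤ Real.exp 1 * (A * (N : ℝ) ^ (max (p / 2 - 1) 0) * (K * (2 * N))) := by
        have h0 : 0 ≤ ∑ k ∈ Finset.range N, ∫ ω, |d k ω| ^ p ∂μ :=
          Finset.sum_nonneg fun k _ => integral_nonneg fun ω => by positivity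
        gcongr
        exact (hK N).trans (by gcongr; linarith)
    _ = _ := by
        rw [Real.rpow_add hN0, Real.rpow_one]
        ring

theorem aux_slln {Ω : Type*} {m0 : MeasurableSpace Ω} (μ : Measure Ω) [IsProbabilityMeasure μ]
    (ℱ : Filtration ℕ m0) (p : ℝ) (hp : 1 < p) (d : ℕ → Ω → ℝ)
    (hmeas : ∀ k, StronglyMeasurable[ℱ (k + 1)] (d k))
    (hLp : ∀ k, MemLp (d k) (ENNReal.ofReal p) μ)
    (hcond : ∀ k, μ[d k | ℱ k] =ᵐ[μ] 0)
    (K : ℝ) (hK : ∀ n : ℕ, ∑ k ∈ Finset.range n, ∫ ω, |d k ω| ^ p ∂μ ≤ K * (n + 1)) :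
    (∀ᵐ ω ∂μ, Tendsto (fun n : ℕ => (n : ℝ)⁻¹ * ∑ k ∈ Finset.range n, d k ω) atTop (nhds 0)) ∧
    Tendsto (fun n : ℕ => eLpNorm (fun ω => (n : ℝ)⁻¹ * ∑ k ∈ Finset.range n, d k ω)
      (ENNReal.ofReal p) μ) atTop (nhds 0) := by
  have hp0 : ENNReal.ofReal p ≠ 0 := by simp; linarith
  have hpt : ENNReal.ofReal p ≠ ∞ := ENNReal.ofReal_ne_top
  have hptr : (ENNReal.ofReal p).toReal = p := ENNReal.toReal_ofReal (by linarith)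
  have h1p : (1 : ℝ≥0∞) ≤ ENNReal.ofReal p := by simpa using hp.le
  obtain ⟨hS, hSL, L, hL0, hL⟩ := aux_moment μ ℱ p hp d hmeas hLp hcond K hK
  have hr : max (p / 2 - 1) 0 + 1 < p := by
    rcases max_cases (p / 2 - 1) 0 with h | h <;> rw [h.1] <;> linarith
  have hr0 : 0 ≤ max (p / 2 - 1) 0 := le_max_right _ _
  generalize max (p / 2 - 1) 0 = r at hr hr0 hL
  set θ : ℝ := (r + 1) / p with hθ
  have hθ1 : θ < 1 := by rw [hθ, div_lt_one (by linarith)]; exact hr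
  have hθ0 : 0 < θ := by rw [hθ]; apply div_pos <;> linarith
  set L' : ℝ := L ^ p⁻¹ with hL'
  have hL'0 : 0 ≤ L' := by positivity
  set S : ℕ → Ω → ℝ := fun n ω => ∑ k ∈ Finset.range n, d k ω with hSdef
  have hnorm : ∀ N : ℕ, 1 ≤ N →
      eLpNorm (S N) (ENNReal.ofReal p) μ ≤ ENNReal.ofReal (L' * (N : ℝ) ^ θ) := by
    intro N hN
    rw [(hSL N).eLpNorm_eq_integral_rpow_norm hp0 hpt, hptr]
    apply ENNReal.ofReal_le_ofReal
    have h1 := hL N hN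
    have h2 : L' * (N : ℝ) ^ θ = (L * (N : ℝ) ^ (r + 1)) ^ p⁻¹ := by
      rw [Real.mul_rpow hL0 (by positivity), ← Real.rpow_mul (by positivity), hθ, div_eq_mul_inv]
    rw [h2]
    simp only [Real.norm_eq_abs]
    exact Real.rpow_le_rpow (integral_nonneg fun ω => by positivity) h1
      (inv_nonneg.2 (by linarith))
  have hlim : ∀ c γ : ℝ, γ < 1 → Tendsto (fun n : ℕ => c * (n : ℝ) ^ (γ - 1)) atTop (nhds 0) := by
    intro c γ hγ
    have h1 := (tendsto_rpow_neg_atTop (y := 1 - γ) (by linarith)).comp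
      (tendsto_natCast_atTop_atTop (R := ℝ))
    have h2 := h1.const_mul c
    simpa [Function.comp_def] using h2
  constructor
  · -- almost everywhere convergence
    have hmart : Martingale S ℱ μ := by
      refine martingale_of_condExp_sub_eq_zero_nat hS (fun i => (hSL i).integrable h1p) fun i => ?_
      have : S (i + 1) - S i = d i := by
        ext ω; simp [hSdef, Finset.sum_range_succ]
      rw [this]
      exact hcond i
    have hsub : Submartingale (fun n ω => |S n ω|) ℱ μ := by
      exact hmart.submartingale.sup hmart.neg.submartingale
    set γ : ℝ := (θ + 1) / 2 with hγ
    have hγ1 : γ < 1 := by linarith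
    have hγ0 : 0 < γ := by linarith
    have hθγ : θ - γ < 0 := by linarith
    let ε : ℕ → ℝ≥0 := fun j => ((2 : ℝ≥0) ^ j) ^ γ
    let A : ℕ → Set Ω := fun j => {ω | (ε j : ℝ) ≤
      (Finset.range (2 ^ j + 1)).sup' Finset.nonempty_range_add_one fun k => |S k ω|}
    have hε : ∀ j, (ε j : ℝ) = ((2 : ℝ) ^ j) ^ γ := by
      intro j; simp [ε]
    have hεpos : ∀ j, 0 < ε j := by
      intro j
      have : (0 : ℝ) < ε j := by rw [hε]; positivity
      exact_mod_cast this
    have hA : ∀ j, μ (A j) ≤ ENNReal.ofReal (L' * ((2 : ℝ) ^ (θ - γ)) ^ j) := by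
      intro j
      have h1 := maximal_ineq hsub (fun n ω => abs_nonneg _) (ε := ε j) (2 ^ j)
      have h2 : ENNReal.ofReal (∫ ω in A j, |S (2 ^ j) ω| ∂μ)
          ≤ ENNReal.ofReal (L' * ((2 ^ j : ℕ) : ℝ) ^ θ) := by
        refine le_trans ?_ (hnorm (2 ^ j) Nat.one_le_two_pow)
        refine le_trans ?_ (eLpNorm_le_eLpNorm_of_exponent_le h1p (hSL _).1)
        have hi := (hSL (2 ^ j)).integrable h1p
        rw [eLpNorm_one_eq_lintegral_enorm, ← ofReal_integral_norm_eq_lintegral_enorm hi]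
        apply ENNReal.ofReal_le_ofReal
        exact setIntegral_le_integral hi.norm (Eventually.of_forall fun ω => abs_nonneg _)
      have h3 := h1.trans h2
      have h4 : ENNReal.ofReal (L' * ((2 ^ j : ℕ) : ℝ) ^ θ)
          = ε j * ENNReal.ofReal (L' * ((2 : ℝ) ^ (θ - γ)) ^ j) := by
        rw [← ENNReal.ofReal_coe_nnreal, ← ENNReal.ofReal_mul (by positivity), hε]
        congr 1
        push_cast
        rw [← Real.rpow_natCast ((2 : ℝ) ^ (θ - γ)), ← Real.rpow_natCast (2 : ℝ),
          ← Real.rpow_mul (by norm_num), ← Real.rpow_mul (by norm_num),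
          ← Real.rpow_mul (by norm_num), mul_left_comm, ← Real.rpow_add (by norm_num)]
        congr 2
        ring
      rw [h4] at h3
      exact (ENNReal.mul_le_mul_iff_right (by exact_mod_cast (hεpos j).ne')
        ENNReal.coe_ne_top).1 h3
    have hsum : ∑' j, μ (A j) ≠ ∞ := by
      have hs : Summable fun j : ℕ => L' * ((2 : ℝ) ^ (θ - γ)) ^ j := by
        apply Summable.mul_left
        apply summable_geometric_of_lt_one (by positivity)
        exact Real.rpow_lt_one_of_one_lt_of_neg (by norm_num) hθγ
      exact ne_top_of_le_ne_top hs.tsum_ofReal_ne_top (ENNReal.tsum_le_tsum hA)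
    filter_upwards [ae_eventually_notMem hsum] with ω hω
    obtain ⟨J, hJ⟩ := eventually_atTop.1 hω
    refine squeeze_zero_norm' ?_ (hlim ((2 : ℝ) ^ γ) γ hγ1)
    filter_upwards [eventually_ge_atTop (2 ^ J)] with n hn
    have hn1 : 1 ≤ n := Nat.one_le_two_pow.trans hn
    have hn0 : (0 : ℝ) < n := by exact_mod_cast hn1
    have hJl : J ≤ Nat.log 2 n := Nat.le_log_of_pow_le (by norm_num) hn
    have h1 := hJ (Nat.log 2 n + 1) (by omega)
    simp only [A, Set.mem_ofPred_eq, not_le, Finset.sup'_lt_iff] at h1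
    have h2 := h1 n (Finset.mem_range.2 (by
      have := Nat.lt_pow_succ_log_self (b := 2) (by norm_num) n
      omega))
    rw [hε] at h2
    have h3 : ((2 : ℝ) ^ (Nat.log 2 n + 1)) ^ γ ≤ (2 * n) ^ γ := by
      apply Real.rpow_le_rpow (by positivity) _ hγ0.le
      have : 2 ^ (Nat.log 2 n) ≤ n := Nat.pow_log_le_self 2 (by omega)
      have h' : (2 : ℝ) ^ (Nat.log 2 n) ≤ n := by exact_mod_cast this
      rw [pow_succ]
      linarith
    rw [norm_mul, norm_inv, Real.norm_natCast, Real.norm_eq_abs]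
    calc (n : ℝ)⁻¹ * |∑ k ∈ Finset.range n, d k ω| ≤ (n : ℝ)⁻¹ * (2 * n) ^ γ := by
          gcongr
          exact h2.le.trans h3
      _ = 2 ^ γ * (n : ℝ) ^ (γ - 1) := by
          rw [Real.mul_rpow (by norm_num) hn0.le, Real.rpow_sub_one hn0.ne']
          field_simp
  · have h0 := ENNReal.tendsto_ofReal (hlim L' θ hθ1)
    rw [ENNReal.ofReal_zero] at h0
    refine tendsto_of_tendsto_of_tendsto_of_le_of_le' tendsto_const_nhds h0
      (Eventually.of_forall fun _ => zero_le) ?_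
    filter_upwards [eventually_ge_atTop 1] with n hn
    have hn0 : (0 : ℝ) < n := by exact_mod_cast hn
    have h1 := eLpNorm_const_smul ((n : ℝ)⁻¹) (S n) (ENNReal.ofReal p) μ
    have h2 : (fun ω => (n : ℝ)⁻¹ * ∑ k ∈ Finset.range n, d k ω) = (n : ℝ)⁻¹ • S n := rfl
    rw [h2, h1, Real.enorm_eq_ofReal (by positivity)]
    calc _ ≤ ENNReal.ofReal ((n : ℝ)⁻¹) * ENNReal.ofReal (L' * (n : ℝ) ^ θ) := by
          gcongr
          exact hnorm n hn
      _ = _ := by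
          rw [← ENNReal.ofReal_mul (by positivity), Real.rpow_sub_one hn0.ne']
          congr 1
          field_simp

/-- The filtration generated by the coordinates. -/
def chainFiltration (X : Type*) [MeasurableSpace X] :
    Filtration ℕ (MeasurableSpace.pi : MeasurableSpace (ℕ → X)) where
  seq n := MeasurableSpace.comap (fun (ω : ℕ → X) (i : Fin (n + 1)) => ω i) MeasurableSpace.pi
  mono' := by
    intro m n hmn
    rw [← measurable_iff_comap_le]
    have h : (fun (ω : ℕ → X) (i : Fin (m + 1)) => ω i)
        = (fun (v : Fin (n + 1) → X) (i : Fin (m + 1)) => v ⟨i, by omega⟩) ∘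
          (fun (ω : ℕ → X) (i : Fin (n + 1)) => ω i) := rfl
    rw [h]
    refine Measurable.comp ?_ (comap_measurable _)
    exact measurable_pi_lambda _ fun i => measurable_pi_apply _
  le' := by
    intro n
    rw [← measurable_iff_comap_le]
    exact measurable_pi_lambda _ fun i => measurable_pi_apply _

theorem chain_coord {X : Type*} [MeasurableSpace X] (n k : ℕ) (h : k ≤ n) :
    Measurable[chainFiltration X n] (fun ω : ℕ → X => ω k) := by
  have h1 : (fun ω : ℕ → X => ω k) = (fun (v : Fin (n + 1) → X) => v ⟨k, by omega⟩) ∘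
          (fun (ω : ℕ → X) (i : Fin (n + 1)) => ω i) := rfl
  rw [h1]
  exact (measurable_pi_apply _).comp (comap_measurable _)

theorem chain_set {X : Type*} [MeasurableSpace X] {P : ProbabilityTheory.Kernel X X}
    {x : X} {μ : Measure (ℕ → X)} (hμ : IsCanonicalChain P x μ) (n : ℕ) (g : X → ℝ≥0∞)
    (hg : Measurable g) (s : Set (ℕ → X)) (hs : MeasurableSet[chainFiltration X n] s) :
    ∫⁻ ω in s, g (ω (n + 1)) ∂μ = ∫⁻ ω in s, kernelOp P g (ω n) ∂μ := by
  have h := hμ.2.2 n g hg (s.indicator 1) ((measurable_const (a := (1 : ℝ≥0∞))).indicator hs)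
  have hs' := (chainFiltration X).le n s hs
  rw [← lintegral_indicator hs', ← lintegral_indicator hs']
  convert h using 2 with ω
  · ext ω; by_cases hω : ω ∈ s <;> simp [hω]
  · ext ω; by_cases hω : ω ∈ s <;> simp [hω]

theorem chain_step {X : Type*} [MeasurableSpace X] {P : ProbabilityTheory.Kernel X X}
    {x : X} {μ : Measure (ℕ → X)} (hμ : IsCanonicalChain P x μ) (n : ℕ) (g : X → ℝ≥0∞)
    (hg : Measurable g) :
    ∫⁻ ω, g (ω (n + 1)) ∂μ = ∫⁻ ω, kernelOp P g (ω n) ∂μ := by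
  simpa using chain_set hμ n g hg univ MeasurableSet.univ

theorem chain_condExp {X : Type*} [MeasurableSpace X] (P : ProbabilityTheory.Kernel X X)
    [IsMarkovKernel P] (x : X) (μ : Measure (ℕ → X)) (hμ : IsCanonicalChain P x μ) (n : ℕ)
    (f : X → ℝ) (hf : Measurable f) (hint : Integrable (fun ω : ℕ → X => f (ω (n + 1))) μ)
    (hint' : Integrable (fun ω : ℕ → X => kernelOpReal P f (ω n)) μ) :
    μ[fun ω : ℕ → X => f (ω (n + 1)) - kernelOpReal P f (ω n) | chainFiltration X n] =ᵐ[μ] 0 := by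
  have := hμ.1
  have hmP : StronglyMeasurable (kernelOpReal P f) := hf.stronglyMeasurable.integral_kernel
  have hmn : StronglyMeasurable[chainFiltration X n]
      (fun ω : ℕ → X => kernelOpReal P f (ω n)) :=
    hmP.comp_measurable (chain_coord n n le_rfl)
  have hpos : Measurable (fun y => ENNReal.ofReal (f y)) := hf.ennreal_ofReal
  have hneg : Measurable (fun y => ENNReal.ofReal (-f y)) := hf.neg.ennreal_ofReal
  have hcoord : Measurable (fun ω : ℕ → X => ω n) := measurable_pi_apply n
  have hfin : ∫⁻ ω, kernelOp P (fun y => ‖f y‖ₑ) (ω n) ∂μ ≠ ∞ := by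
    rw [← chain_step hμ n _ hf.enorm]
    exact hint.2.ne
  have hle1 : ∀ y, kernelOp P (fun y => ENNReal.ofReal (f y)) y ≤ kernelOp P (fun y => ‖f y‖ₑ) y :=
    fun y => lintegral_mono fun z => by
      rw [← ofReal_norm]; exact ENNReal.ofReal_le_ofReal (le_abs_self _)
  have hle2 : ∀ y, kernelOp P (fun y => ENNReal.ofReal (-f y)) y ≤ kernelOp P (fun y => ‖f y‖ₑ) y :=
    fun y => lintegral_mono fun z => by
      rw [← ofReal_norm]; exact ENNReal.ofReal_le_ofReal (neg_le_abs _)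
  have hm0 : Measurable (kernelOp P (fun y => ‖f y‖ₑ)) := hf.enorm.lintegral_kernel
  have hm1 : Measurable (kernelOp P (fun y => ENNReal.ofReal (f y))) := hpos.lintegral_kernel
  have hm2 : Measurable (kernelOp P (fun y => ENNReal.ofReal (-f y))) := hneg.lintegral_kernel
  have hae := ae_lt_top (hm0.comp hcoord) hfin
  have hf1 : ∫⁻ ω, kernelOp P (fun y => ENNReal.ofReal (f y)) (ω n) ∂μ ≠ ∞ :=
    ne_top_of_le_ne_top hfin (lintegral_mono fun ω => hle1 _)
  have hf2 : ∫⁻ ω, kernelOp P (fun y => ENNReal.ofReal (-f y)) (ω n) ∂μ ≠ ∞ :=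
    ne_top_of_le_ne_top hfin (lintegral_mono fun ω => hle2 _)
  have key : (fun ω : ℕ → X => kernelOpReal P f (ω n)) =ᵐ[μ]
      μ[fun ω : ℕ → X => f (ω (n + 1)) | chainFiltration X n] := by
    refine ae_eq_condExp_of_forall_setIntegral_eq ((chainFiltration X).le n) hint
      (fun s _ _ => hint'.integrableOn) (fun s hs _ => ?_) hmn.aestronglyMeasurable
    rw [integral_eq_lintegral_pos_part_sub_lintegral_neg_part hint.integrableOn,
      chain_set hμ n _ hpos s hs, chain_set hμ n _ hneg s hs]
    have e1 : ∀ᵐ ω ∂(μ.restrict s), kernelOpReal P f (ω n) =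
        (kernelOp P (fun y => ENNReal.ofReal (f y)) (ω n)).toReal
          - (kernelOp P (fun y => ENNReal.ofReal (-f y)) (ω n)).toReal := by
      filter_upwards [ae_restrict_of_ae hae] with ω hω
      exact integral_eq_lintegral_pos_part_sub_lintegral_neg_part
        ⟨hf.aestronglyMeasurable, hω⟩
    have g1 : ∫⁻ ω in s, kernelOp P (fun y => ENNReal.ofReal (f y)) (ω n) ∂μ ≠ ∞ :=
      ne_top_of_le_ne_top hf1 (setLIntegral_le_lintegral _ _)
    have g2 : ∫⁻ ω in s, kernelOp P (fun y => ENNReal.ofReal (-f y)) (ω n) ∂μ ≠ ∞ :=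
      ne_top_of_le_ne_top hf2 (setLIntegral_le_lintegral _ _)
    rw [integral_congr_ae e1, integral_sub, integral_toReal, integral_toReal]
    · exact (hm2.comp hcoord).aemeasurable
    · exact ae_lt_top (hm2.comp hcoord) g2
    · exact (hm1.comp hcoord).aemeasurable
    · exact ae_lt_top (hm1.comp hcoord) g1
    · exact integrable_toReal_of_lintegral_ne_top (hm1.comp hcoord).aemeasurable g1
    · exact integrable_toReal_of_lintegral_ne_top (hm2.comp hcoord).aemeasurable g2
  have h1 := condExp_sub hint hint' (chainFiltration X n)
  have h2 := condExp_of_stronglyMeasurable ((chainFiltration X).le n) hmn hint'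
  have h3 : (fun ω : ℕ → X => f (ω (n + 1)) - kernelOpReal P f (ω n))
    = (fun ω : ℕ → X => f (ω (n + 1))) - (fun ω : ℕ → X => kernelOpReal P f (ω n)) := rfl
  rw [h3]
  filter_upwards [h1, key] with ω ha hb
  rw [ha, Pi.sub_apply, h2, ← hb]
  simp

theorem chain_drift {X : Type*} [MeasurableSpace X] (P : ProbabilityTheory.Kernel X X)
    (u : X → ℝ≥0∞) (C : Set X) (b : ℝ≥0) (hu : IsDriftFunction P u C b)
    (x : X) (μ : Measure (ℕ → X)) (hμ : IsCanonicalChain P x μ) (n : ℕ) :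
    ∑ k ∈ Finset.range n, ∫⁻ ω, (u (ω k) - kernelOp P u (ω k)
        + C.indicator (fun _ => (b : ℝ≥0∞)) (ω k)) ∂μ + ∫⁻ ω, u (ω n) ∂μ
      ≤ u x + n * (2 * b) := by
  have := hμ.1
  induction n with
  | zero =>
    have h : ∫⁻ ω, u (ω 0) ∂μ = u x := by
      rw [← lintegral_map hu.measurable_u (measurable_pi_apply 0), hμ.2.1,
        lintegral_dirac' _ hu.measurable_u]
    simp [h]
  | succ n ih =>
    have hpt : ∀ y, u y - kernelOp P u y + C.indicator (fun _ => (b : ℝ≥0∞)) y + kernelOp P u y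
        ≤ u y + 2 * b := by
      intro y
      have hC : C.indicator (fun _ => (b : ℝ≥0∞)) y ≤ b := by
        by_cases hy : y ∈ C <;> simp [hy]
      rcases le_total (kernelOp P u y) (u y) with h | h
      · calc _ = (u y - kernelOp P u y + kernelOp P u y)
              + C.indicator (fun _ => (b : ℝ≥0∞)) y := by ring
          _ ≤ u y + b := by rw [tsub_add_cancel_of_le h]; gcongr
          _ ≤ u y + 2 * b := by
            gcongr
            rw [two_mul]
            exact le_self_add
      · rw [tsub_eq_zero_of_le h, zero_add]
        calc _ ≤ (b : ℝ≥0∞) + (u y + b) := by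
              gcongr
              exact (hu.drift y).trans (by gcongr)
          _ = _ := by ring
    have hmK : Measurable (kernelOp P u) := hu.measurable_u.lintegral_kernel
    have hmKn : Measurable (fun ω : ℕ → X => kernelOp P u (ω n)) :=
      hmK.comp (measurable_pi_apply n)
    have hstep : ∫⁻ ω, (u (ω n) - kernelOp P u (ω n)
        + C.indicator (fun _ => (b : ℝ≥0∞)) (ω n)) ∂μ + ∫⁻ ω, u (ω (n + 1)) ∂μ
        ≤ ∫⁻ ω, u (ω n) ∂μ + 2 * b := by
      rw [chain_step hμ n u hu.measurable_u,
        ← lintegral_add_right _ hmKn]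
      calc _ ≤ ∫⁻ ω, (u (ω n) + 2 * b) ∂μ := lintegral_mono fun ω => hpt (ω n)
        _ = _ := by
          rw [lintegral_add_right _ measurable_const]
          simp
    rw [Finset.sum_range_succ, add_assoc]
    calc _ ≤ _ := add_le_add le_rfl hstep
      _ ≤ (u x + n * (2 * b)) + 2 * b := by
        rw [← add_assoc]
        exact add_le_add ih le_rfl
      _ = _ := by push_cast; ring

theorem kernel_jensen {X : Type*} [MeasurableSpace X] (P : ProbabilityTheory.Kernel X X)
    [IsMarkovKernel P] (p : ℝ) (hp : 1 < p) (f : X → ℝ) (hf : Measurable f) (y : X) :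
    ‖kernelOpReal P f y‖ₑ ^ p ≤ kernelOp P (fun z => ‖f z‖ₑ ^ p) y := by
  have hp0 : ENNReal.ofReal p ≠ 0 := by simp; linarith
  have hptr : (ENNReal.ofReal p).toReal = p := ENNReal.toReal_ofReal (by linarith)
  have h1p : (1 : ℝ≥0∞) ≤ ENNReal.ofReal p := by simpa using hp.le
  have h1 : ‖kernelOpReal P f y‖ₑ ≤ ∫⁻ z, ‖f z‖ₑ ∂(P y) := enorm_integral_le_lintegral_enorm _
  have h2 := eLpNorm_le_eLpNorm_of_exponent_le (μ := P y) h1p hf.aestronglyMeasurable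
  rw [eLpNorm_one_eq_lintegral_enorm,
    eLpNorm_eq_lintegral_rpow_enorm_toReal hp0 ENNReal.ofReal_ne_top, hptr] at h2
  calc _ ≤ ((∫⁻ z, ‖f z‖ₑ ^ p ∂(P y)) ^ (1 / p)) ^ p :=
        ENNReal.rpow_le_rpow (h1.trans h2) (by linarith)
    _ = _ := by
        rw [← ENNReal.rpow_mul, one_div_mul_cancel (by linarith), ENNReal.rpow_one]
        rfl

/-- (Law of large numbers for martingales dominated by drift functions.)
If `(u,C)` is a drift function, `p ∈ (1,∞)`, `f ∈ E_u^p` and `u(x) < ∞`, then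
`(1/n) ∑_{k=0}^{n−1} (f(X_{k+1}) − Pf(X_k)) → 0`, `ℙ_x`-a.e. and in `L^p(ℙ_x)`. -/
theorem stmt6 {X : Type*} [MeasurableSpace X] [StandardBorelSpace X]
    (P : ProbabilityTheory.Kernel X X) [IsMarkovKernel P]
    (u : X → ℝ≥0∞) (C : Set X) (b : ℝ≥0) (hu : IsDriftFunction P u C b)
    (p : ℝ) (hp : 1 < p)
    (f : X → ℝ) (M : ℝ≥0) (hf : MemDriftSpace P u C b p f M)
    (x : X) (hx : u x < ∞)
    (μ : Measure (ℕ → X)) (hμ : IsCanonicalChain P x μ) :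
    (∀ᵐ ω ∂μ, Tendsto
      (fun n : ℕ => (n : ℝ)⁻¹ * ∑ k ∈ Finset.range n, (f (ω (k + 1)) - kernelOpReal P f (ω k)))
      atTop (nhds 0)) ∧
    Tendsto (fun n : ℕ => eLpNorm
      (fun ω => (n : ℝ)⁻¹ * ∑ k ∈ Finset.range n, (f (ω (k + 1)) - kernelOpReal P f (ω k)))
      (ENNReal.ofReal p) μ) atTop (nhds 0) := by
  have := hμ.1
  have hp0 : ENNReal.ofReal p ≠ 0 := by simp; linarith
  have hpt : ENNReal.ofReal p ≠ ∞ := ENNReal.ofReal_ne_top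
  have hptr : (ENNReal.ofReal p).toReal = p := ENNReal.toReal_ofReal (by linarith)
  have h1p : (1 : ℝ≥0∞) ≤ ENNReal.ofReal p := by simpa using hp.le
  obtain ⟨hfm, hfb⟩ := hf
  have hmP : StronglyMeasurable (kernelOpReal P f) := hfm.stronglyMeasurable.integral_kernel
  -- moment bounds for `f`
  let B : ℝ≥0∞ := (M : ℝ≥0∞) ^ p
  have hB : B ≠ ∞ := ENNReal.rpow_ne_top_of_nonneg (by linarith) ENNReal.coe_ne_top
  have hfp : ∀ y, ‖f y‖ₑ ^ p ≤
      B * (u y - kernelOp P u y + C.indicator (fun _ => (b : ℝ≥0∞)) y) := by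
    intro y
    calc ‖f y‖ₑ ^ p ≤ _ := ENNReal.rpow_le_rpow (hfb y) (by linarith)
      _ = _ := by
        rw [ENNReal.mul_rpow_of_nonneg _ _ (by linarith), ← ENNReal.rpow_mul,
          one_div_mul_cancel (by linarith), ENNReal.rpow_one]
  have hsumf : ∀ n : ℕ, ∑ k ∈ Finset.range n, ∫⁻ ω, ‖f (ω k)‖ₑ ^ p ∂μ
      ≤ B * (u x + n * (2 * b)) := by
    intro n
    calc _ ≤ ∑ k ∈ Finset.range n, B * ∫⁻ ω, (u (ω k) - kernelOp P u (ω k)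
        + C.indicator (fun _ => (b : ℝ≥0∞)) (ω k)) ∂μ := by
          refine Finset.sum_le_sum fun k _ => ?_
          rw [← lintegral_const_mul' _ _ hB]
          exact lintegral_mono fun ω => hfp (ω k)
      _ ≤ _ := by
          rw [← Finset.mul_sum]
          gcongr
          exact le_self_add.trans (chain_drift P u C b hu x μ hμ n)
  have hfinn : ∀ n : ℕ, B * (u x + n * (2 * b)) ≠ ∞ := by
    intro n
    refine ENNReal.mul_ne_top hB (ENNReal.add_ne_top.2 ⟨hx.ne, ?_⟩)
    exact ENNReal.mul_ne_top (ENNReal.natCast_ne_top n)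
      (ENNReal.mul_ne_top (by simp) ENNReal.coe_ne_top)
  have hfk : ∀ k, ∫⁻ ω, ‖f (ω k)‖ₑ ^ p ∂μ ≠ ∞ := by
    intro k
    refine ne_top_of_le_ne_top (hfinn (k + 1)) (le_trans ?_ (hsumf (k + 1)))
    exact Finset.single_le_sum (f := fun k => ∫⁻ ω, ‖f (ω k)‖ₑ ^ p ∂μ)
      (fun _ _ => zero_le) (Finset.self_mem_range_succ k)
  have hPk : ∀ k, ∫⁻ ω, ‖kernelOpReal P f (ω k)‖ₑ ^ p ∂μ ≤ ∫⁻ ω, ‖f (ω (k + 1))‖ₑ ^ p ∂μ := by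
    intro k
    rw [chain_step hμ k (fun z => ‖f z‖ₑ ^ p) (hfm.enorm.pow_const p)]
    exact lintegral_mono fun ω => kernel_jensen P p hp f hfm (ω k)
  have hfL : ∀ k, MemLp (fun ω : ℕ → X => f (ω k)) (ENNReal.ofReal p) μ := by
    intro k
    refine ⟨(hfm.comp (measurable_pi_apply k)).aestronglyMeasurable, ?_⟩
    rw [eLpNorm_lt_top_iff_lintegral_rpow_enorm_lt_top hp0 hpt, hptr]
    exact (hfk k).lt_top
  have hPL : ∀ k, MemLp (fun ω : ℕ → X => kernelOpReal P f (ω k)) (ENNReal.ofReal p) μ := by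
    intro k
    refine ⟨(hmP.comp_measurable (measurable_pi_apply k)).aestronglyMeasurable, ?_⟩
    rw [eLpNorm_lt_top_iff_lintegral_rpow_enorm_lt_top hp0 hpt, hptr]
    exact (hPk k).trans_lt (hfk (k + 1)).lt_top
  have hdL : ∀ k, MemLp (fun ω : ℕ → X => f (ω (k + 1)) - kernelOpReal P f (ω k))
      (ENNReal.ofReal p) μ := fun k => (hfL (k + 1)).sub (hPL k)
  have hdk : ∀ k, ∫⁻ ω, ‖f (ω (k + 1)) - kernelOpReal P f (ω k)‖ₑ ^ p ∂μ
      ≤ 2 ^ p * ∫⁻ ω, ‖f (ω (k + 1))‖ₑ ^ p ∂μ := by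
    intro k
    have h2 : (2 : ℝ≥0∞) ^ (p - 1) ≠ ∞ :=
      ENNReal.rpow_ne_top_of_nonneg (by linarith) (by simp)
    calc _ ≤ ∫⁻ ω, 2 ^ (p - 1) * (‖f (ω (k + 1))‖ₑ ^ p + ‖kernelOpReal P f (ω k)‖ₑ ^ p) ∂μ := by
          refine lintegral_mono fun ω => ?_
          refine le_trans (ENNReal.rpow_le_rpow enorm_sub_le (by linarith)) ?_
          exact ENNReal.rpow_add_le_mul_rpow_add_rpow _ _ hp.le
      _ = 2 ^ (p - 1) * (∫⁻ ω, ‖f (ω (k + 1))‖ₑ ^ p ∂μ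
            + ∫⁻ ω, ‖kernelOpReal P f (ω k)‖ₑ ^ p ∂μ) := by
          rw [lintegral_const_mul' _ _ h2, lintegral_add_left]
          exact (hfm.comp (measurable_pi_apply (k + 1))).enorm.pow_const p
      _ ≤ 2 ^ (p - 1) * (2 * ∫⁻ ω, ‖f (ω (k + 1))‖ₑ ^ p ∂μ) := by
          rw [two_mul]
          exact mul_le_mul_right (add_le_add le_rfl (hPk k)) _
      _ = _ := by
          rw [← mul_assoc]
          congr 1
          conv_lhs => rw [← ENNReal.rpow_one 2, ← ENNReal.rpow_mul, one_mul]
          rw [← ENNReal.rpow_add _ _ (by simp) (by simp)]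
          congr 1
          ring
  have h2p : (2 : ℝ≥0∞) ^ p ≠ ∞ := ENNReal.rpow_ne_top_of_nonneg (by linarith) (by simp)
  have hsumd : ∀ n : ℕ,
      ∑ k ∈ Finset.range n, ∫⁻ ω, ‖f (ω (k + 1)) - kernelOpReal P f (ω k)‖ₑ ^ p ∂μ
      ≤ 2 ^ p * (B * (u x + 2 * b)) * (n + 1 : ℕ) := by
    intro n
    calc _ ≤ ∑ k ∈ Finset.range n, 2 ^ p * ∫⁻ ω, ‖f (ω (k + 1))‖ₑ ^ p ∂μ :=
          Finset.sum_le_sum fun k _ => hdk k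
      _ ≤ 2 ^ p * ∑ k ∈ Finset.range (n + 1), ∫⁻ ω, ‖f (ω k)‖ₑ ^ p ∂μ := by
          rw [← Finset.mul_sum, Finset.sum_range_succ' _ n]
          gcongr
          exact le_self_add
      _ ≤ 2 ^ p * (B * (u x + (n + 1 : ℕ) * (2 * b))) := by
          gcongr
          exact hsumf (n + 1)
      _ ≤ 2 ^ p * (B * (u x * (n + 1 : ℕ) + (n + 1 : ℕ) * (2 * b))) := by
          gcongr
          exact le_mul_of_one_le_right zero_le (by simp)
      _ = _ := by ring
  have hKtop : 2 ^ p * (B * (u x + 2 * b)) ≠ ∞ := by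
    have := hfinn 1
    rw [Nat.cast_one, one_mul] at this
    exact ENNReal.mul_ne_top h2p this
  refine aux_slln μ (chainFiltration X) p hp
    (fun k ω => f (ω (k + 1)) - kernelOpReal P f (ω k)) ?_ hdL ?_
    (2 ^ p * (B * (u x + 2 * b))).toReal ?_
  · intro k
    refine StronglyMeasurable.sub ?_ ?_
    · exact hfm.stronglyMeasurable.comp_measurable (chain_coord (k + 1) (k + 1) le_rfl)
    · exact hmP.comp_measurable (chain_coord (k + 1) k (by omega))
  · intro k
    exact chain_condExp P x μ hμ k f hfm ((hfL (k + 1)).integrable h1p)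
      ((hPL k).integrable h1p)
  · intro n
    have e : ∀ k, ∫ ω, |f (ω (k + 1)) - kernelOpReal P f (ω k)| ^ p ∂μ
        = (∫⁻ ω, ‖f (ω (k + 1)) - kernelOpReal P f (ω k)‖ₑ ^ p ∂μ).toReal := by
      intro k
      rw [integral_eq_lintegral_of_nonneg_ae]
      · congr 1
        refine lintegral_congr fun ω => ?_
        rw [← ofReal_norm, ENNReal.ofReal_rpow_of_nonneg (norm_nonneg _) (by linarith),
          Real.norm_eq_abs]
      · exact Eventually.of_forall fun ω => by
          simp only [Pi.zero_apply]
          positivity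
      · have := ((hdL k).integrable_norm_rpow hp0 hpt).1
        simpa [hptr] using this
    simp only [e]
    rw [← ENNReal.toReal_sum]
    · have := ENNReal.toReal_mono (ENNReal.mul_ne_top hKtop (ENNReal.natCast_ne_top _)) (hsumd n)
      rw [ENNReal.toReal_mul (b := ((n + 1 : ℕ) : ℝ≥0∞)), ENNReal.toReal_natCast] at this
      push_cast at this
      exact this
    · intro k _
      exact ne_top_of_le_ne_top (ENNReal.mul_ne_top h2p (hfk (k + 1))) (hdk k)
end
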